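/- Let f : ℝⁿ → ℝ, let τ > 0, and let r : ℝⁿ → ℝ be separable, r(x) = Σᵢ rᵢ(xᵢ), where each rᵢ : ℝ → ℝ is convex, satisfies rᵢ(0) = 0, and rᵢ(t) ≥ 0 for all t ≥ 0. Define g(y,z) = f(y − z) + τ·Σᵢ(yᵢ + zᵢ) + r(y) + r(−z), and let F(x) = f(x) + τ‖x‖₁ + r(x). If (y*, z*) minimizes g over the set {(y,z) : y ≥ 0, z ≥ 0}, then the optimal values of the two problems coincide: g(y*, z*) = F(y* − z*) = min_{x ∈ ℝⁿ} F(x). -/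

import Mathlib

/-!
The positive and negative parts of `x` split it as `x = x⁺ - x⁻` without changing the objective, so
the split problem attains every value of `F`. Conversely `F (y - z) ≤ g y z` whenever `y, z ≥ 0`:
the points `y - z` and `0` lie in `[-z, y]` and have the same sum as its endpoints, so convexity and
`r 0 = 0` give `r (y - z) ≤ r y + r (-z)`.
-/

theorem smul_add_smul_add_smul_add_smul_swap {𝕜 E : Type*} [Semiring 𝕜] [AddCommMonoid E]
    [Module 𝕜 E] {a b : 𝕜} (hab : a + b = 1) (x y : E) :
    (a • x + b • y) + (b • x + a • y) = x + y := by
  rw [add_add_add_comm, ← add_smul, ← add_smul, add_comm b a, hab, one_smul, one_smul]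

theorem add_le_add_of_convexOn_of_mem_segment {𝕜 E β : Type*} [Semiring 𝕜] [PartialOrder 𝕜]
    [AddCommGroup E] [Module 𝕜 E] [AddCommMonoid β] [PartialOrder β] [IsOrderedAddMonoid β]
    [Module 𝕜 β] {s : Set E} {φ : E → β} (hφ : ConvexOn 𝕜 s φ) {x y u v : E} (hx : x ∈ s)
    (hy : y ∈ s) (hu : u ∈ segment 𝕜 x y) (huv : u + v = x + y) : φ u + φ v ≤ φ x + φ y := by
  obtain ⟨a, b, ha, hb, hab, rfl⟩ := hu
  obtain rfl : b • x + a • y = v :=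
    add_left_cancel ((smul_add_smul_add_smul_add_smul_swap hab x y).trans huv.symm)
  calc φ (a • x + b • y) + φ (b • x + a • y)
      ≤ (a • φ x + b • φ y) + (b • φ x + a • φ y) :=
        add_le_add (hφ.2 hx hy ha hb hab) (hφ.2 hx hy hb ha ((add_comm b a).trans hab))
    _ = φ x + φ y := smul_add_smul_add_smul_add_smul_swap hab (φ x) (φ y)

theorem map_sub_add_map_zero_le_of_convexOn {𝕜 β : Type*} [Field 𝕜] [LinearOrder 𝕜]
    [IsStrictOrderedRing 𝕜] [AddCommMonoid β] [PartialOrder β] [IsOrderedAddMonoid β] [Module 𝕜 β]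
    {s : Set 𝕜} {φ : 𝕜 → β} (hφ : ConvexOn 𝕜 s φ) {y z : 𝕜} (hys : y ∈ s) (hzs : -z ∈ s)
    (hy : 0 ≤ y) (hz : 0 ≤ z) : φ (y - z) + φ 0 ≤ φ y + φ (-z) := by
  have hmem : y - z ∈ segment 𝕜 y (-z) := by
    rw [segment_symm, segment_eq_Icc (by linarith)]
    constructor <;> linarith
  exact add_le_add_of_convexOn_of_mem_segment hφ hys hzs hmem (by ring)

section Objectives

variable {𝕜 ι : Type*} [Ring 𝕜] [LinearOrder 𝕜] [Fintype ι]

/-- The `ℓ¹`-regularized objective `F x = f x + τ ‖x‖₁ + ∑ i, r i (x i)`, with the `ℓ¹` norm written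
out as a sum because the norm Mathlib puts on `ι → ℝ` is the sup norm. -/
def l1Objective (f : (ι → 𝕜) → 𝕜) (τ : 𝕜) (r : ι → 𝕜 → 𝕜) (x : ι → 𝕜) : 𝕜 :=
  f x + τ * (∑ i, |x i|) + ∑ i, r i (x i)

/-- The objective `g y z` of the problem obtained from `l1Objective` by substituting `x = y - z`
with `y, z ≥ 0`, in which the `ℓ¹` norm becomes linear. The sign constraints are not built in. -/
def splitObjective (f : (ι → 𝕜) → 𝕜) (τ : 𝕜) (r : ι → 𝕜 → 𝕜) (y z : ι → 𝕜) : 𝕜 :=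
  f (y - z) + τ * (∑ i, (y i + z i)) + (∑ i, r i (y i)) + ∑ i, r i (-(z i))

theorem splitObjective_posPart_negPart [IsOrderedAddMonoid 𝕜] {f : (ι → 𝕜) → 𝕜} {τ : 𝕜}
    {r : ι → 𝕜 → 𝕜} (hzero : ∀ i, r i 0 = 0) (x : ι → 𝕜) :
    splitObjective f τ r x⁺ x⁻ = l1Objective f τ r x := by
  have hr (i : ι) : r i (x i)⁺ + r i (-(x i)⁻) = r i (x i) := by
    rcases le_total 0 (x i) with hx | hx
    · rw [posPart_of_nonneg hx, negPart_of_nonneg hx, neg_zero, hzero, add_zero]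
    · rw [posPart_of_nonpos hx, negPart_of_nonpos hx, neg_neg, hzero, zero_add]
  simp only [splitObjective, l1Objective, posPart_sub_negPart, Pi.posPart_apply, Pi.negPart_apply,
    posPart_add_negPart, add_assoc, ← Finset.sum_add_distrib, hr]

end Objectives

section Minimizers

variable {𝕜 ι : Type*} [Field 𝕜] [LinearOrder 𝕜] [IsStrictOrderedRing 𝕜] [Fintype ι]
  {f : (ι → 𝕜) → 𝕜} {τ : 𝕜} {r : ι → 𝕜 → 𝕜}

theorem l1Objective_sub_le_splitObjective (hτ : 0 ≤ τ) (hconv : ∀ i, ConvexOn 𝕜 Set.univ (r i))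
    (hzero : ∀ i, r i 0 = 0) {y z : ι → 𝕜} (hy : ∀ i, 0 ≤ y i) (hz : ∀ i, 0 ≤ z i) :
    l1Objective f τ r (y - z) ≤ splitObjective f τ r y z := by
  have habs (i : ι) : |(y - z) i| ≤ y i + z i := by
    simpa only [Pi.sub_apply, abs_of_nonneg (hy i), abs_of_nonneg (hz i)] using abs_sub (y i) (z i)
  have hr (i : ι) : r i ((y - z) i) ≤ r i (y i) + r i (-(z i)) := by
    simpa only [Pi.sub_apply, hzero, add_zero] using map_sub_add_map_zero_le_of_convexOn (hconv i)
      (Set.mem_univ (y i)) (Set.mem_univ (-(z i))) (hy i) (hz i)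
  rw [l1Objective, splitObjective, add_assoc _ (∑ i, r i (y i)), ← Finset.sum_add_distrib]
  gcongr with i _ i _
  · exact habs i
  · exact hr i

theorem stmt_15_general (hτ : 0 ≤ τ) (hconv : ∀ i, ConvexOn 𝕜 Set.univ (r i))
    (hzero : ∀ i, r i 0 = 0) {ystar zstar : ι → 𝕜}
    (hy : ∀ i, 0 ≤ ystar i) (hz : ∀ i, 0 ≤ zstar i)
    (hmin : ∀ y z : ι → 𝕜, (∀ i, 0 ≤ y i) → (∀ i, 0 ≤ z i) →
      splitObjective f τ r ystar zstar ≤ splitObjective f τ r y z) :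
    splitObjective f τ r ystar zstar = l1Objective f τ r (ystar - zstar) ∧
      ∀ x, l1Objective f τ r (ystar - zstar) ≤ l1Objective f τ r x := by
  have split_le (x : ι → 𝕜) : splitObjective f τ r ystar zstar ≤ l1Objective f τ r x :=
    (hmin x⁺ x⁻ (posPart_nonneg x) (negPart_nonneg x)).trans_eq
      (splitObjective_posPart_negPart hzero x)
  have le_split : l1Objective f τ r (ystar - zstar) ≤ splitObjective f τ r ystar zstar :=
    l1Objective_sub_le_splitObjective hτ hconv hzero hy hz
  exact ⟨(split_le _).antisymm le_split, fun x => le_split.trans (split_le x)⟩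

end Minimizers

/-- Equality of optimal values: under the assumptions of Lemma 1, if `(y*, z*)`
minimizes `g(y,z) = f(y-z) + τ·Σᵢ(yᵢ+zᵢ) + r(y) + r(-z)` over
`{(y,z) : y ≥ 0, z ≥ 0}`, then `g(y*,z*) = F(y* - z*)` and `F(y* - z*)` is the
minimum of `F(x) = f(x) + τ‖x‖₁ + r(x)` over `ℝⁿ`. -/
theorem stmt_15 (n : ℕ) (f : (Fin n → ℝ) → ℝ) (τ : ℝ) (hτ : 0 < τ)
    (r : Fin n → ℝ → ℝ)
    (hconv : ∀ i, ConvexOn ℝ Set.univ (r i))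
    (hzero : ∀ i, r i 0 = 0)
    (hnonneg : ∀ i (t : ℝ), 0 ≤ t → 0 ≤ r i t)
    (g : (Fin n → ℝ) → (Fin n → ℝ) → ℝ)
    (hg : ∀ y z, g y z =
      f (y - z) + τ * (∑ i, (y i + z i)) + (∑ i, r i (y i)) + (∑ i, r i (-(z i))))
    (F : (Fin n → ℝ) → ℝ)
    (hF : ∀ x, F x = f x + τ * (∑ i, |x i|) + (∑ i, r i (x i)))
    (ystar zstar : Fin n → ℝ)
    (hy : ∀ i, 0 ≤ ystar i) (hz : ∀ i, 0 ≤ zstar i)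
    (hmin : ∀ y z : Fin n → ℝ, (∀ i, 0 ≤ y i) → (∀ i, 0 ≤ z i) →
      g ystar zstar ≤ g y z) :
    g ystar zstar = F (ystar - zstar) ∧
    (∀ x : Fin n → ℝ, F (ystar - zstar) ≤ F x) := by
  obtain rfl : g = splitObjective f τ r := funext₂ hg
  obtain rfl : F = l1Objective f τ r := funext hF
  exact stmt_15_general hτ.le hconv hzero hy hz hmin
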